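/- Let J ⊆ Δ. The element z^J = w_Δ w_J lies in W^J and is the greatest element of W^J for the order ≤_J: for every w ∈ W^J one has w ≤_J z^J, and z^J is the unique element of W^J that is maximal with respect to <_J. Moreover z^J ∈ V^J, and for every u ∈ W with z^J ≤_∅ u and every s ∈ S with ℓ(s z^J) < ℓ(z^J), one has ℓ(su) < ℓ(u). -/

import Mathlib

/-! Common framework: a reduced (crystallographic) root system `Φ` in a real vector
space `V`, with Weyl group `W` (generated by the reflections `s_α`, `α ∈ Φ`, inside the
group of linear automorphisms of `V`), a base `Δ` of simple roots with positive system
`Pos = Φ⁺`, and the associated combinatorics. -/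

open scoped Classical Pointwise

namespace PaperSp

variable {V : Type} [AddCommGroup V] [Module ℝ V]

/-- The data of a reduced crystallographic root system in `V`:  a finite spanning set
`Phi` of nonzero vectors together with, for each root `α`, a linear functional
`pairing α = ⟨·, α∨⟩` taking the value `2` at `α`, such that the associated reflections
`s_α : β ↦ β − ⟨β, α∨⟩α` preserve `Phi`, all pairings are integral, and the only
multiples of a root `α` which are roots are `±α`. -/
structure RootSystemData (V : Type) [AddCommGroup V] [Module ℝ V] : Type where
  Phi : Set V
  pairing : V → V →ₗ[ℝ] ℝ
  pairing_self : ∀ α, α ∈ Phi → pairing α α = 2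
  finite : Phi.Finite
  span_top : Submodule.span ℝ Phi = ⊤
  zero_not_mem : (0 : V) ∉ Phi
  crystallographic : ∀ α ∈ Phi, ∀ β ∈ Phi, ∃ n : ℤ, pairing α β = (n : ℝ)
  reduced : ∀ α ∈ Phi, ∀ t : ℝ, t • α ∈ Phi → t = 1 ∨ t = -1
  reflect_mem : ∀ α ∈ Phi, ∀ β ∈ Phi, β - pairing α β • α ∈ Phi

/-- The reflection `s_α` associated to a root `α` (the identity if `α ∉ Φ`). -/
noncomputable def RootSystemData.refl (R : RootSystemData V) (α : V) : V ≃ₗ[ℝ] V :=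
  if h : α ∈ R.Phi then Module.reflection (R.pairing_self α h) else 1

/-- The set of reflections `{s_α : α ∈ K}` associated to a set `K` of roots. -/
noncomputable def refls (R : RootSystemData V) (K : Set V) : Set (V ≃ₗ[ℝ] V) :=
  {s | ∃ α ∈ K, s = R.refl α}

/-- The Weyl group `W`, generated by all reflections `s_α`, `α ∈ Φ`. -/
noncomputable def weylGroup (R : RootSystemData V) : Subgroup (V ≃ₗ[ℝ] V) :=
  Subgroup.closure (refls R R.Phi)

/-- The subgroup `W_J` generated by the reflections `s_α`, `α ∈ J`. -/
noncomputable def WsubJ (R : RootSystemData V) (J : Set V) : Subgroup (V ≃ₗ[ℝ] V) :=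
  Subgroup.closure (refls R J)

/-- The word length of `w` with respect to a generating set `S` of a group. -/
noncomputable def lengthWrt {G : Type*} [Group G] (S : Set G) (w : G) : ℕ :=
  sInf {n | ∃ ls : List G, ls.length = n ∧ (∀ x ∈ ls, x ∈ S) ∧ ls.prod = w}

/-- The length function `ℓ` on `W` with respect to the simple reflections
`S = {s_α : α ∈ Δ}`. -/
noncomputable def len (R : RootSystemData V) (Δ : Set V) (w : V ≃ₗ[ℝ] V) : ℕ :=
  lengthWrt (refls R Δ) w

/-- `Pos` and `Δ` form a positive system with base `Δ` for the root system `R`: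
`Φ = Pos ⊔ (−Pos)`, `Δ ⊆ Pos` is linearly independent, and every positive root is a
nonnegative integral combination of simple roots. -/
structure IsBase (R : RootSystemData V) (Pos Δ : Set V) : Prop where
  pos_sub : Pos ⊆ R.Phi
  mem_or_neg : ∀ α ∈ R.Phi, α ∈ Pos ∨ -α ∈ Pos
  not_both : ∀ α : V, ¬(α ∈ Pos ∧ -α ∈ Pos)
  delta_sub : Δ ⊆ Pos
  indep : LinearIndependent ℝ (fun a : Δ => (a : V))
  decomp : ∀ β ∈ Pos, ∃ c : V →₀ ℕ, (c.support : Set V) ⊆ Δ ∧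
    β = c.sum (fun a m => (m : ℝ) • a)

/-- The set `W^J = {w ∈ W : w(α) ∈ Φ⁺ for all α ∈ J}` of minimal length representatives
of `W/W_J`. -/
noncomputable def WupJ (R : RootSystemData V) (Pos : Set V) (J : Set V) :
    Set (V ≃ₗ[ℝ] V) :=
  {w | w ∈ weylGroup R ∧ ∀ α ∈ J, w α ∈ Pos}

/-- The set `V^J = W^J \ ⋃_{α ∈ Δ\J} W^{J∪{α}}`. -/
noncomputable def VupJ (R : RootSystemData V) (Pos Δ : Set V) (J : Set V) :
    Set (V ≃ₗ[ℝ] V) :=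
  {w | w ∈ WupJ R Pos J ∧ ∀ α ∈ Δ, α ∉ J → w ∉ WupJ R Pos (J ∪ {α})}

/-- `Φ_J(1) = Φ⁻ \ (Φ⁻ ∩ W_J·J)`. -/
noncomputable def PhiJone (R : RootSystemData V) (Pos : Set V) (J : Set V) : Set V :=
  (R.Phi \ Pos) \ {β | ∃ v ∈ WsubJ R J, ∃ α ∈ J, β = v α}

/-- `Φ_J(w) = w · Φ_J(1)`. -/
noncomputable def PhiJ (R : RootSystemData V) (Pos : Set V) (J : Set V)
    (w : V ≃ₗ[ℝ] V) : Set V :=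
  (fun x => w x) '' (PhiJone R Pos J)

/-- `hProjJ R Pos J pJ` says that `pJ` is the projection `w ↦ (w)^J` sending an element
of `W` to the unique element of `W^J` in the coset `w W_J`. -/
noncomputable def IsProjJ (R : RootSystemData V) (Pos : Set V) (J : Set V)
    (pJ : (V ≃ₗ[ℝ] V) → (V ≃ₗ[ℝ] V)) : Prop :=
  ∀ w ∈ weylGroup R, pJ w ∈ WupJ R Pos J ∧ (pJ w)⁻¹ * w ∈ WsubJ R J

/-- The product `s_i ⋯ s_1` of the first `i` members of a sequence in a group. -/
noncomputable def chainProd {G : Type*} [Group G] (s : ℕ → G) (i : ℕ) : G :=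
  (((List.range' 1 i).map s).reverse).prod

/-- The chain `w^(0) = w`, `w^(i) = (s_i ⋯ s_1 w)^J` associated to `w` and a sequence
of simple reflections. -/
noncomputable def chainElt {G : Type*} [Group G] (pJ : G → G) (s : ℕ → G) (w : G)
    (i : ℕ) : G :=
  if i = 0 then w else pJ (chainProd s i * w)

/-- The partial order `<_J`:  `w <_J w'` iff there are simple reflections
`s_1, …, s_r` (`r ≥ 1`) such that, with `w^(i) = (s_i ⋯ s_1 w)^J`, the lengths
`ℓ(w^(i))` are strictly increasing and `w^(r) = w'`.  Taking `pJ = id`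
(and `J = ∅`) gives the weak left order `<_∅`. -/
noncomputable def ltJ {G : Type*} [Group G] (S : Set G) (ℓ : G → ℕ) (pJ : G → G)
    (w w' : G) : Prop :=
  ∃ r : ℕ, 1 ≤ r ∧ ∃ s : ℕ → G,
    (∀ m, 1 ≤ m → m ≤ r → s m ∈ S) ∧
    (∀ m, 1 ≤ m → m ≤ r → ℓ (chainElt pJ s w (m - 1)) < ℓ (chainElt pJ s w m)) ∧
    chainElt pJ s w r = w'

/-- `w` is the longest element of a subgroup `H` of `W` (with respect to `ℓ`). -/
noncomputable def IsLongestIn (R : RootSystemData V) (Δ : Set V)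
    (H : Subgroup (V ≃ₗ[ℝ] V)) (w : V ≃ₗ[ℝ] V) : Prop :=
  w ∈ H ∧ ∀ v ∈ H, len R Δ v ≤ len R Δ w

end PaperSp

namespace PaperSp

section Helpers

variable {V : Type} [AddCommGroup V] [Module ℝ V]

theorem refl_apply' (R : RootSystemData V) {α : V} (h : α ∈ R.Phi) (v : V) :
    R.refl α v = v - R.pairing α v • α := by
  simp [RootSystemData.refl, h, Module.reflection_apply]

theorem refl_sq (R : RootSystemData V) (α : V) : R.refl α * R.refl α = 1 := by
  unfold RootSystemData.refl
  split_ifs with h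
  · ext v
    exact Module.involutive_reflection (R.pairing_self α h) v
  · simp

theorem refl_inv (R : RootSystemData V) (α : V) : (R.refl α)⁻¹ = R.refl α :=
  inv_eq_of_mul_eq_one_left (refl_sq R α)

theorem refl_self (R : RootSystemData V) {α : V} (h : α ∈ R.Phi) : R.refl α α = -α := by
  rw [refl_apply' R h, R.pairing_self α h, two_smul]; abel

theorem refl_mem (R : RootSystemData V) {α : V} (h : α ∈ R.Phi) : R.refl α ∈ weylGroup R :=
  Subgroup.subset_closure ⟨α, h, rfl⟩

theorem WsubJ_le (R : RootSystemData V) {J : Set V} (hJ : J ⊆ R.Phi) :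
    WsubJ R J ≤ weylGroup R :=
  Subgroup.closure_mono fun _ ⟨α, ha, hs⟩ => ⟨α, hJ ha, hs⟩

theorem weyl_phi (R : RootSystemData V) {w : V ≃ₗ[ℝ] V} (hw : w ∈ weylGroup R) :
    ∀ β ∈ R.Phi, w β ∈ R.Phi := by
  have key : ∀ α ∈ R.Phi, ∀ β ∈ R.Phi, R.refl α β ∈ R.Phi := fun α ha β hb => by
    rw [refl_apply' R ha]; exact R.reflect_mem α ha β hb
  induction hw using Subgroup.closure_induction'' with
  | mem x hx => obtain ⟨α, ha, rfl⟩ := hx; exact key α ha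
  | inv_mem x hx => obtain ⟨α, ha, rfl⟩ := hx; rw [refl_inv]; exact key α ha
  | one => intro β hb; simpa using hb
  | mul x y _ _ ihx ihy => intro β hb; exact ihx _ (ihy _ hb)

theorem pairing_equiv (R : RootSystemData V) {w : V ≃ₗ[ℝ] V} (hw : w ∈ weylGroup R)
    {α : V} (ha : α ∈ R.Phi) (v : V) : R.pairing (w α) (w v) = R.pairing α v := by
  have hwa := weyl_phi R hw α ha
  have := Module.Dual.eq_of_preReflection_mapsTo (x := w α) R.finite R.span_top
    (f := R.pairing (w α)) (g := (R.pairing α).comp (w⁻¹ : V ≃ₗ[ℝ] V).toLinearMap)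
    (R.pairing_self _ hwa)
    (fun β hb => by
      rw [Module.preReflection_apply]; exact R.reflect_mem _ hwa _ hb)
    (by
      have : w⁻¹ (w α) = α := w.symm_apply_apply α
      simp only [LinearMap.comp_apply, LinearEquiv.coe_coe, this]
      exact R.pairing_self _ ha)
    (fun β hb => by
      rw [Module.preReflection_apply]
      have h1 := R.reflect_mem α ha (w⁻¹ β) (weyl_phi R (inv_mem hw) β hb)
      have h2 := weyl_phi R hw _ h1
      rw [map_sub, map_smul] at h2
      have : w (w⁻¹ β) = β := w.apply_symm_apply β
      rw [this] at h2
      exact h2)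
  rw [this]
  have : w⁻¹ (w v) = v := w.symm_apply_apply v
  simp only [LinearMap.comp_apply, LinearEquiv.coe_coe, this]

theorem refl_equiv (R : RootSystemData V) {w : V ≃ₗ[ℝ] V} (hw : w ∈ weylGroup R)
    {α : V} (ha : α ∈ R.Phi) : R.refl (w α) = w * R.refl α * w⁻¹ := by
  rw [eq_mul_inv_iff_mul_eq]
  ext v
  change R.refl (w α) (w v) = w (R.refl α v)
  rw [refl_apply' R (weyl_phi R hw α ha), refl_apply' R ha, pairing_equiv R hw ha, map_sub,
    map_smul]

/-- invariant form -/
noncomputable def bform (R : RootSystemData V) (x y : V) : ℝ :=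
  ∑ α ∈ R.finite.toFinset, R.pairing α x * R.pairing α y

theorem bform_pairing (R : RootSystemData V) {α : V} (ha : α ∈ R.Phi) (x : V) :
    2 * bform R x α = R.pairing α x * bform R α α := by
  have hs := refl_mem R ha
  have hinv : ∀ x y, bform R (R.refl α x) (R.refl α y) = bform R x y := by
    intro x y
    have hi : ∀ v, R.refl α (R.refl α v) = v := fun v =>
      congrArg (fun f : V ≃ₗ[ℝ] V => f v) (refl_sq R α)
    unfold bform
    refine Finset.sum_nbij' (fun β => R.refl α β) (fun β => R.refl α β) ?_ ?_ ?_ ?_ ?_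
    · intro β hb
      simp only [Set.Finite.mem_toFinset] at hb ⊢
      exact weyl_phi R hs β hb
    · intro β hb
      simp only [Set.Finite.mem_toFinset] at hb ⊢
      exact weyl_phi R hs β hb
    · intro β _; exact hi β
    · intro β _; exact hi β
    · intro β hb
      simp only [Set.Finite.mem_toFinset] at hb
      have h1 := pairing_equiv R hs hb (R.refl α x)
      have h2 := pairing_equiv R hs hb (R.refl α y)
      rw [hi] at h1 h2
      rw [h1, h2]
  have h := hinv x α
  rw [refl_self R ha, refl_apply' R ha] at h
  have e : bform R (x - R.pairing α x • α) (-α) =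
      - bform R x α + R.pairing α x * bform R α α := by
    unfold bform
    rw [Finset.mul_sum, ← Finset.sum_neg_distrib, ← Finset.sum_add_distrib]
    refine Finset.sum_congr rfl fun β _ => ?_
    simp only [map_sub, map_neg, map_smul, smul_eq_mul]
    ring
  rw [e] at h
  linarith

theorem bform_pos (R : RootSystemData V) {α : V} (ha : α ∈ R.Phi) : 0 < bform R α α := by
  unfold bform
  refine Finset.sum_pos' (fun β _ => mul_self_nonneg _) ⟨α, by simpa using ha, ?_⟩
  rw [R.pairing_self α ha]; norm_num

section Base

variable {R : RootSystemData V} {Pos Δ : Set V}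

theorem IsBase.delta_phi (hB : IsBase R Pos Δ) {α : V} (ha : α ∈ Δ) : α ∈ R.Phi :=
  hB.pos_sub (hB.delta_sub ha)

theorem IsBase.neg_of_not (hB : IsBase R Pos Δ) {β : V} (hb : β ∈ R.Phi) (h : β ∉ Pos) :
    -β ∈ Pos := (hB.mem_or_neg β hb).resolve_left h

theorem IsBase.neg_not (hB : IsBase R Pos Δ) {β : V} (h : β ∈ Pos) : -β ∉ Pos :=
  fun h' => hB.not_both β ⟨h, h'⟩

theorem IsBase.span_delta (hB : IsBase R Pos Δ) : ⊤ ≤ Submodule.span ℝ (Set.range (fun a : Δ => (a : V))) := by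
  rw [← R.span_top, Subtype.range_coe, Submodule.span_le]
  have hp : ∀ β ∈ Pos, β ∈ Submodule.span ℝ Δ := by
    intro β hb
    obtain ⟨c, hc, rfl⟩ := hB.decomp β hb
    exact Submodule.sum_mem _ fun a ha => Submodule.smul_mem _ _ (Submodule.subset_span (hc ha))
  intro β hb
  rcases hB.mem_or_neg β hb with h | h
  · exact hp β h
  · simpa using Submodule.neg_mem _ (hp _ h)

noncomputable def IsBase.b (hB : IsBase R Pos Δ) : Module.Basis Δ ℝ V :=
  Module.Basis.mk hB.indep hB.span_delta

theorem IsBase.b_apply (hB : IsBase R Pos Δ) (i : Δ) : hB.b i = (i : V) := by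
  simp [IsBase.b]

noncomputable def IsBase.co (hB : IsBase R Pos Δ) (i : Δ) : V →ₗ[ℝ] ℝ := hB.b.coord i

theorem IsBase.co_self (hB : IsBase R Pos Δ) (i : Δ) : hB.co i (i : V) = 1 := by
  unfold IsBase.co
  conv_lhs => rw [← hB.b_apply i]
  simp

theorem IsBase.co_ne (hB : IsBase R Pos Δ) {i : Δ} {a : V} (ha : a ∈ Δ) (h : a ≠ i) :
    hB.co i a = 0 := by
  unfold IsBase.co
  have := hB.b_apply ⟨a, ha⟩
  conv_lhs => rw [show a = ((⟨a, ha⟩ : Δ) : V) from rfl, ← this]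
  rw [Module.Basis.coord_apply, Module.Basis.repr_self, Finsupp.single_apply, if_neg]
  rintro rfl; exact h rfl

theorem IsBase.co_delta_nonneg (hB : IsBase R Pos Δ) (i : Δ) {a : V} (ha : a ∈ Δ) :
    0 ≤ hB.co i a := by
  by_cases h : a = i
  · rw [h, hB.co_self]; norm_num
  · rw [hB.co_ne ha h]

theorem IsBase.co_ext (hB : IsBase R Pos Δ) {v w : V} (h : ∀ i, hB.co i v = hB.co i w) :
    v = w := hB.b.ext_elem h

theorem IsBase.co_nonneg (hB : IsBase R Pos Δ) (i : Δ) {β : V} (hb : β ∈ Pos) :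
    0 ≤ hB.co i β := by
  obtain ⟨c, hc, rfl⟩ := hB.decomp β hb
  rw [Finsupp.sum, map_sum]
  refine Finset.sum_nonneg fun a ha => ?_
  rw [map_smul, smul_eq_mul]
  exact mul_nonneg (Nat.cast_nonneg _) (hB.co_delta_nonneg i (hc ha))

theorem IsBase.pos_of_co (hB : IsBase R Pos Δ) (i : Δ) {β : V} (hb : β ∈ R.Phi)
    (h : 0 < hB.co i β) : β ∈ Pos := by
  by_contra hn
  have := hB.co_nonneg i (hB.neg_of_not hb hn)
  rw [map_neg] at this
  linarith

theorem IsBase.ne_zero (hB : IsBase R Pos Δ) {β : V} (hb : β ∈ R.Phi) : β ≠ 0 := by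
  rintro rfl; exact R.zero_not_mem hb

theorem IsBase.exists_co (hB : IsBase R Pos Δ) {β : V} (hb : β ∈ Pos) :
    ∃ i, 0 < hB.co i β := by
  by_contra! h
  apply hB.ne_zero (hB.pos_sub hb)
  refine hB.co_ext fun i => ?_
  rw [map_zero]
  exact le_antisymm (h i) (hB.co_nonneg i hb)

theorem IsBase.pos_of_all (hB : IsBase R Pos Δ) {β : V} (hb : β ∈ R.Phi)
    (h : ∀ i, 0 ≤ hB.co i β) : β ∈ Pos := by
  by_contra hn
  obtain ⟨i, hi⟩ := hB.exists_co (hB.neg_of_not hb hn)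
  rw [map_neg] at hi
  have := h i
  linarith

theorem IsBase.fin (hB : IsBase R Pos Δ) : Finite Δ :=
  (R.finite.subset (hB.delta_sub.trans hB.pos_sub)).to_subtype

theorem IsBase.co_sum (hB : IsBase R Pos Δ) [Fintype Δ] (v : V) :
    v = ∑ i : Δ, hB.co i v • (i : V) := by
  conv_lhs => rw [← hB.b.sum_repr v]
  exact Finset.sum_congr rfl fun i _ => by rw [hB.b_apply]; rfl

/-- `v` lies in the span of `J`. -/
def IsBase.inJ (hB : IsBase R Pos Δ) (J : Set V) (v : V) : Prop :=
  ∀ i : Δ, (i : V) ∉ J → hB.co i v = 0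

theorem IsBase.inJ_delta (hB : IsBase R Pos Δ) (v : V) : hB.inJ Δ v :=
  fun i hi => (hi i.2).elim

theorem IsBase.inJ_self (hB : IsBase R Pos Δ) {J : Set V} (hJ : J ⊆ Δ) {α : V} (ha : α ∈ J) :
    hB.inJ J α := fun i hi => hB.co_ne (hJ ha) (by rintro rfl; exact hi ha)

theorem IsBase.inJ_neg (hB : IsBase R Pos Δ) {J : Set V} {v : V} (h : hB.inJ J v) :
    hB.inJ J (-v) := fun i hi => by rw [map_neg, h i hi, neg_zero]

theorem IsBase.co_WJ (hB : IsBase R Pos Δ) {J : Set V} (hJ : J ⊆ Δ) {x : V ≃ₗ[ℝ] V}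
    (hx : x ∈ WsubJ R J) : ∀ v : V, ∀ i : Δ, (i : V) ∉ J → hB.co i (x v) = hB.co i v := by
  have key : ∀ α ∈ J, ∀ v : V, ∀ i : Δ, (i : V) ∉ J → hB.co i (R.refl α v) = hB.co i v := by
    intro α ha v i hi
    rw [refl_apply' R (hB.delta_phi (hJ ha)), map_sub, map_smul, hB.inJ_self hJ ha i hi]
    simp
  induction hx using Subgroup.closure_induction'' with
  | mem x hx => obtain ⟨α, ha, rfl⟩ := hx; exact key α ha
  | inv_mem x hx => obtain ⟨α, ha, rfl⟩ := hx; rw [refl_inv]; exact key α ha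
  | one => intro v i _; rfl
  | mul x y _ _ ihx ihy =>
    intro v i hi
    rw [← ihy v i hi, ← ihx (y v) i hi]; rfl

theorem IsBase.inJ_WJ (hB : IsBase R Pos Δ) {J : Set V} (hJ : J ⊆ Δ) {x : V ≃ₗ[ℝ] V}
    (hx : x ∈ WsubJ R J) {v : V} (hv : hB.inJ J v) : hB.inJ J (x v) :=
  fun i hi => by rw [hB.co_WJ hJ hx v i hi, hv i hi]

/-- a positive root outside the span of `J` stays positive under `W_J` -/
theorem IsBase.pos_WJ (hB : IsBase R Pos Δ) {J : Set V} (hJ : J ⊆ Δ) {x : V ≃ₗ[ℝ] V}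
    (hx : x ∈ WsubJ R J) {β : V} (hb : β ∈ Pos) (hv : ¬ hB.inJ J β) : x β ∈ Pos := by
  unfold IsBase.inJ at hv
  push Not at hv
  obtain ⟨i, hi, h⟩ := hv
  have hx' := WsubJ_le R (fun a ha => hB.delta_phi (hJ ha)) hx
  refine hB.pos_of_co i (weyl_phi R hx' _ (hB.pos_sub hb)) ?_
  rw [hB.co_WJ hJ hx β i hi]
  exact lt_of_le_of_ne (hB.co_nonneg i hb) (Ne.symm h)

theorem IsBase.map_pos (hB : IsBase R Pos Δ) {J : Set V} {w : V ≃ₗ[ℝ] V}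
    (hw : w ∈ weylGroup R) (h : ∀ α ∈ J, w α ∈ Pos) {γ : V} (hg : γ ∈ Pos) (hgJ : hB.inJ J γ) :
    w γ ∈ Pos := by
  have := hB.fin
  have : Fintype Δ := Fintype.ofFinite Δ
  refine hB.pos_of_all (weyl_phi R hw _ (hB.pos_sub hg)) fun k => ?_
  rw [hB.co_sum γ, map_sum, map_sum]
  refine Finset.sum_nonneg fun i _ => ?_
  rw [map_smul, map_smul, smul_eq_mul]
  by_cases hi : (i : V) ∈ J
  · exact mul_nonneg (hB.co_nonneg i hg) (hB.co_nonneg k (h i hi))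
  · rw [hgJ i hi, zero_mul]

theorem IsBase.map_neg' (hB : IsBase R Pos Δ) {J : Set V} (hJ : J ⊆ Δ) {w : V ≃ₗ[ℝ] V}
    (hw : w ∈ weylGroup R) (h : ∀ α ∈ J, w α ∉ Pos) {γ : V} (hg : γ ∈ Pos)
    (hgJ : hB.inJ J γ) : w γ ∉ Pos := by
  have := hB.fin
  have : Fintype Δ := Fintype.ofFinite Δ
  intro hp
  obtain ⟨k, hk⟩ := hB.exists_co hp
  rw [hB.co_sum γ, map_sum, map_sum] at hk
  refine absurd hk (not_lt.2 (Finset.sum_nonpos fun i _ => ?_))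
  rw [map_smul, map_smul, smul_eq_mul]
  by_cases hi : (i : V) ∈ J
  · have h1 := hB.co_nonneg k (hB.neg_of_not (weyl_phi R hw _ (hB.delta_phi (hJ hi))) (h i hi))
    rw [map_neg] at h1
    exact mul_nonpos_of_nonneg_of_nonpos (hB.co_nonneg i hg) (by linarith)
  · rw [hgJ i hi, zero_mul]

theorem IsBase.simple_pos (hB : IsBase R Pos Δ) {α β : V} (ha : α ∈ Δ) (hb : β ∈ Pos)
    (hne : β ≠ α) : R.refl α β ∈ Pos := by
  have hap := hB.delta_phi ha
  by_cases h : ∃ i : Δ, (i : V) ≠ α ∧ hB.co i β ≠ 0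
  · obtain ⟨i, hi, h⟩ := h
    refine hB.pos_of_co i (weyl_phi R (refl_mem R hap) _ (hB.pos_sub hb)) ?_
    rw [refl_apply' R hap, map_sub, map_smul, hB.co_ne ha (Ne.symm hi), smul_zero, sub_zero]
    exact lt_of_le_of_ne (hB.co_nonneg i hb) (Ne.symm h)
  · exfalso
    push Not at h
    have e : β = hB.co ⟨α, ha⟩ β • α := by
      refine hB.co_ext fun i => ?_
      rw [map_smul, smul_eq_mul]
      by_cases hi : (i : V) = α
      · have : i = ⟨α, ha⟩ := Subtype.ext hi
        subst this
        rw [hB.co_self, mul_one]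
      · rw [h i hi, hB.co_ne ha (Ne.symm hi), mul_zero]
    have hp := hB.pos_sub hb
    rw [e] at hp
    rcases R.reduced α hap _ hp with h1 | h1
    · rw [h1, one_smul] at e; exact hne e
    · have := hB.co_nonneg ⟨α, ha⟩ hb
      rw [h1] at this
      linarith

theorem IsBase.refl_mem_WJ (hB : IsBase R Pos Δ) {J : Set V} (hJ : J ⊆ Δ) :
    ∀ γ ∈ Pos, hB.inJ J γ → R.refl γ ∈ WsubJ R J := by
  have := hB.fin
  have : Fintype Δ := Fintype.ofFinite Δ
  have key : ∀ n : ℕ, ∀ γ ∈ Pos, hB.inJ J γ → ∑ i, hB.co i γ < n → R.refl γ ∈ WsubJ R J := by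
    intro n
    induction n with
    | zero =>
      intro γ hg _ h
      have := Finset.sum_nonneg fun i (_ : i ∈ Finset.univ) => hB.co_nonneg i hg
      push_cast at h
      linarith
    | succ n ih =>
      intro γ hg hgJ h
      by_cases hmem : γ ∈ J
      · exact Subgroup.subset_closure ⟨γ, hmem, rfl⟩
      have hgp := hB.pos_sub hg
      -- find a in J with positive pairing
      have hex : ∃ a ∈ J, 0 < R.pairing a γ := by
        by_contra! hno
        have h1 := bform_pos R hgp
        have h2 : bform R γ γ = ∑ i : Δ, hB.co i γ * bform R γ i := by
          conv_lhs => unfold bform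
          have : ∀ β, R.pairing β γ = ∑ i : Δ, hB.co i γ * R.pairing β i := by
            intro β
            conv_lhs => rw [hB.co_sum γ]
            simp
          unfold bform
          simp_rw [Finset.mul_sum]
          rw [Finset.sum_comm]
          refine Finset.sum_congr rfl fun β _ => ?_
          conv_lhs => enter [2]; rw [this β]
          rw [Finset.mul_sum]
          exact Finset.sum_congr rfl fun i _ => by ring
        rw [h2] at h1
        refine absurd h1 (not_lt.2 (Finset.sum_nonpos fun i _ => ?_))
        by_cases hi : (i : V) ∈ J
        · refine mul_nonpos_of_nonneg_of_nonpos (hB.co_nonneg i hg) ?_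
          have h3 := bform_pairing R (hB.delta_phi i.2) γ
          have h4 := mul_nonpos_of_nonpos_of_nonneg (hno i hi) (bform_pos R (hB.delta_phi i.2)).le
          linarith
        · rw [hgJ i hi, zero_mul]
      obtain ⟨a, haJ, hpa⟩ := hex
      have hap := hB.delta_phi (hJ haJ)
      have hsa : R.refl a ∈ WsubJ R J := Subgroup.subset_closure ⟨a, haJ, rfl⟩
      have h1 := hB.simple_pos (hJ haJ) hg (by rintro rfl; exact hmem haJ)
      have h2 := hB.inJ_WJ hJ hsa hgJ
      have h3 : ∑ i, hB.co i (R.refl a γ) < n := by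
        have : ∑ i, hB.co i (R.refl a γ) = ∑ i, hB.co i γ - R.pairing a γ := by
          have hone : ∑ i, hB.co i a = 1 := by
            rw [Finset.sum_eq_single ⟨a, hJ haJ⟩]
            · exact hB.co_self ⟨a, hJ haJ⟩
            · intro i _ hi
              exact hB.co_ne (hJ haJ) (fun h => hi (Subtype.ext h.symm))
            · simp
          rw [refl_apply' R hap]
          simp only [map_sub, map_smul, smul_eq_mul]
          rw [Finset.sum_sub_distrib, ← Finset.mul_sum, hone, mul_one]
        rw [this]
        obtain ⟨m, hm⟩ := R.crystallographic a hap γ hgp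
        rw [hm] at hpa ⊢
        have : (1 : ℝ) ≤ m := by
          have : 0 < m := by exact_mod_cast hpa
          exact_mod_cast this
        push_cast at h
        linarith
      have h4 := ih _ h1 h2 h3
      rw [refl_equiv R (refl_mem R hap) hgp] at h4
      have h5 := mul_mem (mul_mem (inv_mem hsa) h4) hsa
      simpa [mul_assoc] using h5
  intro γ hg hgJ
  obtain ⟨n, hn⟩ := exists_nat_gt (∑ i, hB.co i γ)
  exact key n γ hg hgJ hn

theorem refl_neg (R : RootSystemData V) {α : V} (h : α ∈ R.Phi) : R.refl (-α) = R.refl α := by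
  have := refl_equiv R (refl_mem R h) h
  rw [refl_self R h] at this
  rw [this]; simp

theorem IsBase.weyl_eq (hB : IsBase R Pos Δ) : weylGroup R = WsubJ R Δ := by
  apply le_antisymm
  · unfold weylGroup
    rw [Subgroup.closure_le]
    rintro _ ⟨α, ha, rfl⟩
    rcases hB.mem_or_neg α ha with h | h
    · exact hB.refl_mem_WJ subset_rfl α h (hB.inJ_delta _)
    · rw [← refl_neg R ha]
      exact hB.refl_mem_WJ subset_rfl _ h (hB.inJ_delta _)
  · exact WsubJ_le R fun a ha => hB.delta_phi ha

end Base

section Len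

variable {R : RootSystemData V} {Pos Δ : Set V}

theorem refls_inv {J : Set V} {x : V ≃ₗ[ℝ] V} (hx : x ∈ refls R J) : x⁻¹ = x := by
  obtain ⟨α, _, rfl⟩ := hx; exact refl_inv R α

theorem lengthWrt_le {G : Type*} [Group G] {S : Set G} {l : List G} (h : ∀ x ∈ l, x ∈ S) :
    lengthWrt S l.prod ≤ l.length := Nat.sInf_le ⟨l, rfl, h, rfl⟩

theorem exists_word {J : Set V} {w : V ≃ₗ[ℝ] V} (hw : w ∈ WsubJ R J) :
    ∃ l : List (V ≃ₗ[ℝ] V), l.length = lengthWrt (refls R J) w ∧ (∀ x ∈ l, x ∈ refls R J) ∧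
      l.prod = w := by
  have hne : {n | ∃ ls : List (V ≃ₗ[ℝ] V), ls.length = n ∧ (∀ x ∈ ls, x ∈ refls R J) ∧
      ls.prod = w}.Nonempty := by
    have : ∃ ls : List (V ≃ₗ[ℝ] V), (∀ x ∈ ls, x ∈ refls R J) ∧ ls.prod = w := by
      induction hw using Subgroup.closure_induction'' with
      | mem x hx => exact ⟨[x], by simpa using hx, by simp⟩
      | inv_mem x hx => exact ⟨[x], by simpa using hx, by simp [refls_inv hx]⟩
      | one => exact ⟨[], by simp, by simp⟩
      | mul x y _ _ ihx ihy =>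
        obtain ⟨l, hl, rfl⟩ := ihx
        obtain ⟨l', hl', rfl⟩ := ihy
        refine ⟨l ++ l', fun x hx => ?_, by simp⟩
        rcases List.mem_append.1 hx with h | h
        · exact hl x h
        · exact hl' x h
    obtain ⟨l, hl, hp⟩ := this
    exact ⟨_, l, rfl, hl, hp⟩
  exact Nat.sInf_mem hne

theorem prod_mem_WJ {J : Set V} {l : List (V ≃ₗ[ℝ] V)} (h : ∀ x ∈ l, x ∈ refls R J) :
    l.prod ∈ WsubJ R J :=
  Subgroup.list_prod_mem _ fun x hx => Subgroup.subset_closure (h x hx)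

theorem lengthWrt_inv_le {J : Set V} {w : V ≃ₗ[ℝ] V} (hw : w ∈ WsubJ R J) :
    lengthWrt (refls R J) w⁻¹ ≤ lengthWrt (refls R J) w := by
  obtain ⟨l, hl, hS, rfl⟩ := exists_word hw
  rw [← hl, List.prod_inv_reverse]
  have : (l.map fun x => x⁻¹) = l := by
    conv_rhs => rw [← List.map_id l]
    exact List.map_congr_left fun x hx => refls_inv (hS x hx)
  rw [this]
  refine (lengthWrt_le (fun x hx => hS x (by simpa using hx))).trans (by simp)

theorem lengthWrt_inv {J : Set V} {w : V ≃ₗ[ℝ] V} (hw : w ∈ WsubJ R J) :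
    lengthWrt (refls R J) w⁻¹ = lengthWrt (refls R J) w := by
  refine le_antisymm (lengthWrt_inv_le hw) ?_
  have := lengthWrt_inv_le (inv_mem hw)
  rwa [inv_inv] at this

theorem IsBase.exchange (hB : IsBase R Pos Δ) {J : Set V} (hJ : J ⊆ Δ) {α : V} (ha : α ∈ Δ)
    (l : List (V ≃ₗ[ℝ] V)) (hl : ∀ x ∈ l, x ∈ refls R J) (hn : l.prod α ∉ Pos) :
    ∃ l' : List (V ≃ₗ[ℝ] V), l'.length < l.length ∧ (∀ x ∈ l', x ∈ refls R J) ∧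
      l'.prod = l.prod * R.refl α := by
  have hJp : J ⊆ R.Phi := fun a h => hB.delta_phi (hJ h)
  induction l with
  | nil => exact (hn (hB.delta_sub ha)).elim
  | cons t l ih =>
    have hl' : ∀ x ∈ l, x ∈ refls R J := fun x hx => hl x (List.mem_cons_of_mem _ hx)
    have ht := hl t List.mem_cons_self
    by_cases h : l.prod α ∈ Pos
    · refine ⟨l, by simp, hl', ?_⟩
      obtain ⟨β, hb, rfl⟩ := ht
      have he : l.prod α = β := by
        by_contra hne
        apply hn
        rw [List.prod_cons]
        exact hB.simple_pos (hJ hb) h hne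
      have := refl_equiv R (WsubJ_le R hJp (prod_mem_WJ hl')) (hB.delta_phi ha)
      rw [he] at this
      rw [List.prod_cons, this]
      simp [mul_assoc, refl_sq]
    · obtain ⟨l', h1, h2, h3⟩ := ih hl' h
      refine ⟨t :: l', by simpa using h1, ?_, by simp [h3, mul_assoc]⟩
      intro x hx
      rcases List.mem_cons.1 hx with rfl | hx
      · exact ht
      · exact h2 x hx

theorem IsBase.lenJ_lt (hB : IsBase R Pos Δ) {J : Set V} (hJ : J ⊆ Δ) {α : V} (ha : α ∈ Δ)
    {w : V ≃ₗ[ℝ] V} (hw : w ∈ WsubJ R J) (hn : w α ∉ Pos) :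
    lengthWrt (refls R J) (w * R.refl α) < lengthWrt (refls R J) w := by
  obtain ⟨l, hl, hS, rfl⟩ := exists_word hw
  obtain ⟨l', h1, h2, h3⟩ := hB.exchange hJ ha l hS hn
  rw [← h3, ← hl]
  exact (lengthWrt_le h2).trans_lt h1

theorem IsBase.mul_refl_self (hB : IsBase R Pos Δ) {α : V} (ha : α ∈ Δ)
    {w : V ≃ₗ[ℝ] V} (hp : w α ∈ Pos) : (w * R.refl α) α ∉ Pos := by
  change w (R.refl α α) ∉ Pos
  rw [refl_self R (hB.delta_phi ha), map_neg]
  exact hB.neg_not hp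

theorem IsBase.lenJ_gt (hB : IsBase R Pos Δ) {J : Set V} (hJ : J ⊆ Δ) {α : V} (ha : α ∈ J)
    {w : V ≃ₗ[ℝ] V} (hw : w ∈ WsubJ R J) (hp : w α ∈ Pos) :
    lengthWrt (refls R J) w < lengthWrt (refls R J) (w * R.refl α) := by
  have := hB.lenJ_lt hJ (hJ ha) (mul_mem hw (Subgroup.subset_closure ⟨α, ha, rfl⟩))
    (hB.mul_refl_self (hJ ha) hp)
  rwa [mul_assoc, refl_sq, mul_one] at this

theorem IsBase.eq_one (hB : IsBase R Pos Δ) {J : Set V} (hJ : J ⊆ Δ)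
    {x : V ≃ₗ[ℝ] V} (hx : x ∈ WsubJ R J) (h : ∀ α ∈ J, x α ∈ Pos) : x = 1 := by
  obtain ⟨l, hl, hS, hp⟩ := exists_word hx
  rcases List.eq_nil_or_concat l with rfl | ⟨l', t, rfl⟩
  · simpa using hp.symm
  · exfalso
    obtain ⟨α, ha, rfl⟩ := hS t (by simp)
    have h1 := hB.lenJ_gt hJ ha hx (h α ha)
    have h2 : x * R.refl α = l'.prod := by
      rw [← hp]; simp [mul_assoc, refl_sq]
    rw [h2, ← hl] at h1
    have := lengthWrt_le (S := refls R J) (l := l') (fun y hy => hS y (by simp [hy]))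
    simp at h1
    omega

theorem IsBase.len_right_lt (hB : IsBase R Pos Δ) {α : V} (ha : α ∈ Δ) {w : V ≃ₗ[ℝ] V}
    (hw : w ∈ weylGroup R) (hn : w α ∉ Pos) : len R Δ (w * R.refl α) < len R Δ w :=
  hB.lenJ_lt subset_rfl ha (hB.weyl_eq ▸ hw) hn

theorem IsBase.len_right_gt (hB : IsBase R Pos Δ) {α : V} (ha : α ∈ Δ) {w : V ≃ₗ[ℝ] V}
    (hw : w ∈ weylGroup R) (hp : w α ∈ Pos) : len R Δ w < len R Δ (w * R.refl α) :=
  hB.lenJ_gt subset_rfl ha (hB.weyl_eq ▸ hw) hp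

theorem IsBase.len_inv (hB : IsBase R Pos Δ) {w : V ≃ₗ[ℝ] V}
    (hw : w ∈ weylGroup R) : len R Δ w⁻¹ = len R Δ w :=
  lengthWrt_inv (hB.weyl_eq ▸ hw)

theorem IsBase.len_left (hB : IsBase R Pos Δ) {α : V} (ha : α ∈ Δ) {w : V ≃ₗ[ℝ] V}
    (hw : w ∈ weylGroup R) : len R Δ (R.refl α * w) = len R Δ (w⁻¹ * R.refl α) := by
  rw [← hB.len_inv (mul_mem (refl_mem R (hB.delta_phi ha)) hw), mul_inv_rev, refl_inv]

theorem IsBase.len_left_lt (hB : IsBase R Pos Δ) {α : V} (ha : α ∈ Δ) {w : V ≃ₗ[ℝ] V}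
    (hw : w ∈ weylGroup R) (hn : w⁻¹ α ∉ Pos) : len R Δ (R.refl α * w) < len R Δ w := by
  rw [hB.len_left ha hw, ← hB.len_inv hw]
  exact hB.len_right_lt ha (inv_mem hw) hn

theorem IsBase.len_left_gt (hB : IsBase R Pos Δ) {α : V} (ha : α ∈ Δ) {w : V ≃ₗ[ℝ] V}
    (hw : w ∈ weylGroup R) (hp : w⁻¹ α ∈ Pos) : len R Δ w < len R Δ (R.refl α * w) := by
  rw [hB.len_left ha hw, ← hB.len_inv hw]
  exact hB.len_right_gt ha (inv_mem hw) hp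

/-- longest elements make simple roots negative -/
theorem IsBase.longest (hB : IsBase R Pos Δ) {J : Set V} (hJ : J ⊆ Δ) {w : V ≃ₗ[ℝ] V}
    (hw : IsLongestIn R Δ (WsubJ R J) w) :
    (∀ α ∈ J, w α ∉ Pos) ∧ (∀ α ∈ J, w⁻¹ α ∉ Pos) := by
  have hw' := WsubJ_le R (fun a ha => hB.delta_phi (hJ ha)) hw.1
  constructor
  · intro α ha hp
    have h1 := hB.len_right_gt (hJ ha) hw' hp
    have h2 := hw.2 _ (mul_mem hw.1 (Subgroup.subset_closure ⟨α, ha, rfl⟩))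
    omega
  · intro α ha hp
    have h1 := hB.len_left_gt (hJ ha) hw' hp
    have h2 := hw.2 _ (mul_mem (Subgroup.subset_closure ⟨α, ha, rfl⟩) hw.1)
    omega

theorem IsBase.map_neg_pos (hB : IsBase R Pos Δ) {J : Set V} (hJ : J ⊆ Δ) {w : V ≃ₗ[ℝ] V}
    (hw : w ∈ weylGroup R) (h : ∀ α ∈ J, w α ∉ Pos) {γ : V} (hg : γ ∈ R.Phi) (hn : γ ∉ Pos)
    (hgJ : hB.inJ J γ) : w γ ∈ Pos := by
  by_contra hc
  have h1 := hB.neg_of_not hg hn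
  have h2 := hB.map_neg' hJ hw h h1 (hB.inJ_neg hgJ)
  rw [map_neg] at h2
  exact h2 (hB.neg_of_not (weyl_phi R hw _ hg) hc)

theorem IsBase.proj_unique (hB : IsBase R Pos Δ) {J : Set V} (hJ : J ⊆ Δ) {u v : V ≃ₗ[ℝ] V}
    (hu : u ∈ WupJ R Pos J) (hv : v ∈ WupJ R Pos J) (h : u⁻¹ * v ∈ WsubJ R J) : u = v := by
  have hJp : J ⊆ R.Phi := fun a ha => hB.delta_phi (hJ ha)
  have : u⁻¹ * v = 1 := by
    refine hB.eq_one hJ h fun α ha => ?_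
    by_contra hn
    have hphi := weyl_phi R (WsubJ_le R hJp h) α (hJp ha)
    have h1 := hB.map_pos hu.1 hu.2 (hB.neg_of_not hphi hn)
      (hB.inJ_neg (hB.inJ_WJ hJ h (hB.inJ_self hJ ha)))
    rw [map_neg] at h1
    have h2 : u ((u⁻¹ * v) α) = v α := u.apply_symm_apply (v α)
    rw [h2] at h1
    exact hB.neg_not (hv.2 α ha) h1
  exact (inv_mul_eq_one.1 this)

end Len

section Chain

theorem chainProd_succ {G : Type*} [Group G] (s : ℕ → G) (m : ℕ) :
    chainProd s (m + 1) = s (m + 1) * chainProd s m := by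
  unfold chainProd
  rw [List.range'_1_concat]
  simp [add_comm]

theorem chainProd_zero {G : Type*} [Group G] (s : ℕ → G) : chainProd s 0 = 1 := by
  simp [chainProd]

theorem chainProd_shift {G : Type*} [Group G] (s : ℕ → G) (m : ℕ) :
    chainProd s (m + 1) = chainProd (fun i => s (i + 1)) m * s 1 := by
  induction m with
  | zero => simp [chainProd_succ, chainProd_zero]
  | succ m ih => rw [chainProd_succ, ih, chainProd_succ, mul_assoc]

theorem chainElt_id {G : Type*} [Group G] (s : ℕ → G) (w : G) (m : ℕ) :
    chainElt id s w m = chainProd s m * w := by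
  unfold chainElt
  split_ifs with h
  · subst h; simp [chainProd_zero]
  · rfl

theorem ltJ_cons {G : Type*} [Group G] {S : Set G} {ℓ : G → ℕ} {pJ : G → G} {w z t : G}
    (ht : t ∈ S) (hp : pJ (t * w) = t * w) (hl : ℓ w < ℓ (t * w))
    (h : t * w = z ∨ ltJ S ℓ pJ (t * w) z) : ltJ S ℓ pJ w z := by
  rcases h with rfl | ⟨r, hr, s, hs, hlen, hz⟩
  · refine ⟨1, le_rfl, fun _ => t, fun _ _ _ => ht, ?_, ?_⟩
    · intro m h1 h2
      obtain rfl : m = 1 := by omega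
      simpa [chainElt, chainProd, hp] using hl
    · simp [chainElt, chainProd, hp]
  · set s' : ℕ → G := fun i => if i = 1 then t else s (i - 1) with hs'
    have hch : ∀ m, chainElt pJ s' w (m + 1) = chainElt pJ s (t * w) m := by
      intro m
      have e1 : chainProd s' (m + 1) = chainProd s m * t := by
        rw [chainProd_shift]
        have : (s' 1) = t := by simp [hs']
        rw [this]
        congr 1
        unfold chainProd
        congr 2
        refine List.map_congr_left fun i hi => ?_
        have : 1 ≤ i := by simp at hi; omega
        simp [hs']
        omega
      unfold chainElt
      rw [if_neg (by omega), e1]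
      split_ifs with hm
      · subst hm
        simpa [chainProd_zero] using hp
      · rw [mul_assoc]
    refine ⟨r + 1, by omega, s', ?_, ?_, ?_⟩
    · intro m h1 h2
      simp only [hs']
      split_ifs with h
      · exact ht
      · exact hs _ (by omega) (by omega)
    · intro m h1 h2
      obtain ⟨m, rfl⟩ : ∃ k, m = k + 1 := ⟨m - 1, by omega⟩
      rw [hch, Nat.add_sub_cancel]
      rcases Nat.eq_zero_or_pos m with rfl | hm
      · simpa [chainElt] using hl
      · have := hlen m hm (by omega)
        rw [← hch, Nat.sub_add_cancel hm] at this
        exact this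
    · rw [hch, hz]

end Chain

end Helpers

end PaperSp

namespace PaperSp

/-- Let `J ⊆ Δ`.  The element `z^J = w_Δ w_J` lies in `W^J` and is the
greatest element of `W^J` for `≤_J`; it is the unique maximal element of `W^J` with
respect to `<_J`.  Moreover `z^J ∈ V^J`, and for every `u ∈ W` with `z^J ≤_∅ u` and
every `s ∈ S` with `ℓ(s z^J) < ℓ(z^J)` one has `ℓ(su) < ℓ(u)`. -/
theorem statement_6 {V : Type} [AddCommGroup V] [Module ℝ V]
    (R : RootSystemData V) (Pos Δ : Set V) (hBase : IsBase R Pos Δ)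
    (J : Set V) (hJ : J ⊆ Δ)
    (pJ : (V ≃ₗ[ℝ] V) → (V ≃ₗ[ℝ] V)) (hpJ : IsProjJ R Pos J pJ)
    (wD : V ≃ₗ[ℝ] V) (hwD : IsLongestIn R Δ (weylGroup R) wD)
    (wJ : V ≃ₗ[ℝ] V) (hwJ : IsLongestIn R Δ (WsubJ R J) wJ) :
    (wD * wJ ∈ WupJ R Pos J) ∧
    (∀ w ∈ WupJ R Pos J, w = wD * wJ ∨ ltJ (refls R Δ) (len R Δ) pJ w (wD * wJ)) ∧
    (∀ w ∈ WupJ R Pos J,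
      (∀ w' ∈ WupJ R Pos J, ¬ ltJ (refls R Δ) (len R Δ) pJ w w') → w = wD * wJ) ∧
    (wD * wJ ∈ VupJ R Pos Δ J) ∧
    (∀ u ∈ weylGroup R,
      (wD * wJ = u ∨ ltJ (refls R Δ) (len R Δ) id (wD * wJ) u) →
      ∀ s ∈ refls R Δ, len R Δ (s * (wD * wJ)) < len R Δ (wD * wJ) →
        len R Δ (s * u) < len R Δ u) := by
  have hJp : J ⊆ R.Phi := fun a ha => hBase.delta_phi (hJ ha)
  have hDW : wD ∈ weylGroup R := hwD.1
  have hJW : wJ ∈ weylGroup R := WsubJ_le R hJp hwJ.1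
  have hwD' : IsLongestIn R Δ (WsubJ R Δ) wD := by rw [← hBase.weyl_eq]; exact hwD
  obtain ⟨hD1, hD2⟩ := hBase.longest subset_rfl hwD'
  obtain ⟨hJ1, hJ2⟩ := hBase.longest hJ hwJ
  have hzW : wD * wJ ∈ weylGroup R := mul_mem hDW hJW
  -- `wJ` is an involution
  have hinv : wJ * wJ = 1 := by
    refine hBase.eq_one hJ (mul_mem hwJ.1 hwJ.1) fun α ha => ?_
    exact hBase.map_neg_pos hJ hJW hJ1 (weyl_phi R hJW _ (hJp ha)) (hJ1 α ha)
      (hBase.inJ_WJ hJ hwJ.1 (hBase.inJ_self hJ ha))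
  have hz : wD * wJ ∈ WupJ R Pos J := by
    refine ⟨hzW, fun α ha => ?_⟩
    exact hBase.map_neg_pos subset_rfl hDW hD1 (weyl_phi R hJW _ (hJp ha)) (hJ1 α ha)
      (hBase.inJ_delta _)
  have hgreat : ∀ w ∈ WupJ R Pos J,
      w = wD * wJ ∨ ltJ (refls R Δ) (len R Δ) pJ w (wD * wJ) := by
    have key : ∀ n : ℕ, ∀ w ∈ WupJ R Pos J, len R Δ wD < len R Δ w + n →
        w = wD * wJ ∨ ltJ (refls R Δ) (len R Δ) pJ w (wD * wJ) := by
      intro n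
      induction n with
      | zero =>
        intro w hw h
        have := hwD.2 w hw.1
        omega
      | succ n ih =>
        intro w hw h
        have hwi := inv_mem hw.1
        by_cases hex : ∃ α ∈ Δ, w⁻¹ α ∈ Pos ∧ w⁻¹ α ∉ J
        · right
          obtain ⟨α, ha, hp, hn⟩ := hex
          have hsw : R.refl α * w ∈ WupJ R Pos J := by
            refine ⟨mul_mem (refl_mem R (hBase.delta_phi ha)) hw.1, fun δ hd => ?_⟩
            refine hBase.simple_pos ha (hw.2 δ hd) ?_
            rintro rfl
            apply hn
            have : w⁻¹ (w δ) = δ := w.symm_apply_apply δ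
            exact this.symm ▸ hd
          have hl := hBase.len_left_gt ha hw.1 hp
          have hpr := hpJ _ hsw.1
          exact ltJ_cons ⟨α, ha, rfl⟩ (hBase.proj_unique hJ hpr.1 hsw hpr.2) hl
            (ih _ hsw (by omega))
        · left
          push Not at hex
          have hneg : ∀ α ∈ Δ, (w * wJ)⁻¹ α ∉ Pos := by
            intro α ha
            rw [mul_inv_rev]
            change wJ⁻¹ (w⁻¹ α) ∉ Pos
            by_cases hp : w⁻¹ α ∈ Pos
            · exact hJ2 _ (hex α ha hp)
            · have hphi := weyl_phi R hwi _ (hBase.delta_phi ha)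
              have hg := hBase.neg_of_not hphi hp
              have hww : w (w⁻¹ α) = α := w.apply_symm_apply α
              have hnJ : ¬ hBase.inJ J (-(w⁻¹ α)) := by
                intro hin
                have := hBase.map_pos hw.1 hw.2 hg hin
                rw [map_neg, hww] at this
                exact hBase.neg_not (hBase.delta_sub ha) this
              have := hBase.pos_WJ hJ (inv_mem hwJ.1) hg hnJ
              rw [map_neg] at this
              intro h'
              exact hBase.neg_not h' this
          have hwwJ := mul_mem hw.1 hJW
          have h1 : (w * wJ)⁻¹ * wD = 1 := by
            refine hBase.eq_one subset_rfl ?_ fun α ha => ?_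
            · rw [← hBase.weyl_eq]; exact mul_mem (inv_mem hwwJ) hDW
            · exact hBase.map_neg_pos subset_rfl (inv_mem hwwJ) hneg
                (weyl_phi R hDW _ (hBase.delta_phi ha)) (hD1 α ha) (hBase.inJ_delta _)
          rw [← inv_mul_eq_one.1 h1, mul_assoc, hinv, mul_one]
    intro w hw
    exact key (len R Δ wD + 1) w hw (by omega)
  refine ⟨hz, hgreat, ?_, ?_, ?_⟩
  · intro w hw hmax
    exact (hgreat w hw).resolve_right (hmax _ hz)
  · refine ⟨hz, fun α ha hn hmem => ?_⟩
    have h1 := hmem.2 α (Or.inr rfl)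
    have hnJ : ¬ hBase.inJ J α := fun h => by
      have := h ⟨α, ha⟩ hn
      rw [hBase.co_self ⟨α, ha⟩] at this
      norm_num at this
    have h2 := hBase.pos_WJ hJ hwJ.1 (hBase.delta_sub ha) hnJ
    exact hBase.map_neg' subset_rfl hDW hD1 h2 (hBase.inJ_delta _) h1
  · intro u _ hzu s hs hlt
    -- `u = wD * x` with `x` in `W_J`
    have hux : ∃ x ∈ WsubJ R J, u = wD * x := by
      rcases hzu with rfl | ⟨r, _, t, ht, hlen, rfl⟩
      · exact ⟨wJ, hwJ.1, rfl⟩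
      · have key : ∀ m, m ≤ r → ∃ x ∈ WsubJ R J, chainElt id t (wD * wJ) m = wD * x := by
          intro m
          induction m with
          | zero => intro _; exact ⟨wJ, hwJ.1, by simp [chainElt]⟩
          | succ m ih =>
            intro hm
            obtain ⟨x, hx, hxe⟩ := ih (by omega)
            have hl := hlen (m + 1) (by omega) hm
            obtain ⟨β, hb, hbe⟩ := ht (m + 1) (by omega) hm
            have hstep : chainElt id t (wD * wJ) (m + 1) = R.refl β * (wD * x) := by
              rw [← hxe, chainElt_id, chainElt_id, chainProd_succ, hbe, mul_assoc]
            rw [Nat.add_sub_cancel, hstep, hxe] at hl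
            have hxW := WsubJ_le R hJp hx
            have hbp := hBase.delta_phi hb
            have hphi := weyl_phi R (inv_mem hDW) _ hbp
            have hg := hBase.neg_of_not hphi (hD2 β hb)
            have hin : hBase.inJ J (-(wD⁻¹ β)) := by
              by_contra hnJ
              have h1 := hBase.pos_WJ hJ (inv_mem hx) hg hnJ
              rw [map_neg] at h1
              have h2 : (wD * x)⁻¹ β ∉ Pos := by
                rw [mul_inv_rev]
                intro h'
                exact hBase.neg_not h' h1
              have := hBase.len_left_lt hb (mul_mem hDW hxW) h2
              omega
            have h3 := hBase.refl_mem_WJ hJ _ hg hin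
            rw [refl_neg R hphi, refl_equiv R (inv_mem hDW) hbp, inv_inv] at h3
            refine ⟨_, mul_mem h3 hx, ?_⟩
            rw [hstep]
            simp [mul_assoc]
        exact key r le_rfl
    obtain ⟨x, hx, rfl⟩ := hux
    obtain ⟨α, ha, rfl⟩ := hs
    have hxW := WsubJ_le R hJp hx
    have hphi := weyl_phi R (inv_mem hDW) _ (hBase.delta_phi ha)
    have hg := hBase.neg_of_not hphi (hD2 α ha)
    have hnJ : ¬ hBase.inJ J (-(wD⁻¹ α)) := by
      intro hin
      have h1 := hBase.map_neg' hJ (inv_mem hJW) hJ2 hg hin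
      rw [map_neg] at h1
      have h2 : (wD * wJ)⁻¹ α ∈ Pos := by
        rw [mul_inv_rev]
        change wJ⁻¹ (wD⁻¹ α) ∈ Pos
        by_contra h'
        exact h1 (hBase.neg_of_not (weyl_phi R (inv_mem hJW) _ hphi) h')
      have := hBase.len_left_gt ha hzW h2
      omega
    have h1 := hBase.pos_WJ hJ (inv_mem hx) hg hnJ
    rw [map_neg] at h1
    refine hBase.len_left_lt ha (mul_mem hDW hxW) ?_
    rw [mul_inv_rev]
    intro h'
    exact hBase.neg_not h' h1

end PaperSp
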